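/- Let (Ω, μ) be a probability space, let E and F be real normed vector spaces, let g : E → F be Lipschitz with constant C₀ ≥ 0, and let K, N, d be positive natural numbers with E = Fin N → ℝ^d. Let x : Ω → F, z : Ω → Fin N → ℝ^d, y : Ω → Fin N → Fin K be random variables on a finite probability space, m : Fin K → ℝ^d a codebook, and P : Fin K → Fin K → ℝ≥0 a transition kernel with rows summing to 1. Let the received indices ŷ be conditionally independent across positions given ω, with ŷ_n distributed according to P(y_n(ω), ·), and set x̂ = g(m ∘ ŷ). Then E[‖x - x̂‖²] ≤ 2·E_ω[‖x(ω) - g(z(ω))‖²] + 2·C₀²·E_ω[ ∑_{n=1}^{N} ∑_{k=1}^{K} P(y_n(ω), k) · ‖z_n(ω) - m_k‖² ]. -/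

import Mathlib

open Finset

/-!
By the triangle inequality through `g z`, the Lipschitz bound and `(a + b)² ≤ 2a² + 2b²`, every
received index vector `q` has squared loss at most `2 ‖x - g z‖² + 2 C² ‖z - m ∘ q‖²`. The squared
`L²` distance on the right is a sum of terms each depending on a single coordinate of `q`, so
averaging it over the product law of `q` only involves the one-coordinate marginals. This gives the
closed form of the transmission error.
-/

section ProductWeights

variable {ι R : Type*} [Fintype ι] [DecidableEq ι] [CommSemiring R]
  {κ : ι → Type*} [∀ i, Fintype (κ i)] {p : ∀ i, κ i → R}

lemma sum_pi_prod_eq_one (hp : ∀ i, ∑ k, p i k = 1) : ∑ q : ∀ i, κ i, ∏ i, p i (q i) = 1 := by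
  simp only [← Fintype.prod_sum, hp, prod_const_one]

lemma sum_pi_prod_mul_apply (hp : ∀ i, ∑ k, p i k = 1) (n : ι) (f : κ n → R) :
    ∑ q : ∀ i, κ i, (∏ i, p i (q i)) * f (q n) = ∑ k, p n k * f k := by
  -- Absorbing `f` into the `n`-th factor turns the summand into a pure product.
  let r : ∀ i, κ i → R := Function.update p n fun k => p n k * f k
  have r_self : r n = fun k => p n k * f k := Function.update_self ..
  have r_of_ne {i : ι} (hi : i ≠ n) : r i = p i := Function.update_of_ne hi ..
  have absorb (q : ∀ i, κ i) : (∏ i, p i (q i)) * f (q n) = ∏ i, r i (q i) := by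
    rw [Fintype.prod_eq_mul_prod_compl n, Fintype.prod_eq_mul_prod_compl n, r_self,
      mul_right_comm]
    congr 1
    exact prod_congr rfl fun i hi => by rw [r_of_ne (by simpa using hi)]
  calc ∑ q : ∀ i, κ i, (∏ i, p i (q i)) * f (q n)
      = ∏ i, ∑ k, r i k := by simp only [absorb, Fintype.prod_sum]
    _ = ∑ k, r n k := Fintype.prod_eq_single n fun i hi => by rw [r_of_ne hi, hp]
    _ = ∑ k, p n k * f k := by rw [r_self]

lemma sum_pi_prod_mul_sum_apply (hp : ∀ i, ∑ k, p i k = 1) (f : ∀ i, κ i → R) :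
    ∑ q : ∀ i, κ i, (∏ i, p i (q i)) * ∑ i, f i (q i) = ∑ i, ∑ k, p i k * f i k := by
  simp only [mul_sum]
  rw [sum_comm]
  exact sum_congr rfl fun n _ => sum_pi_prod_mul_apply hp n (f n)

end ProductWeights

lemma dist_sq_le_of_lipschitzWith {E F : Type*} [PseudoMetricSpace E] [PseudoMetricSpace F]
    {g : E → F} {C : NNReal} (hg : LipschitzWith C g) (x : F) (z w : E) :
    dist x (g w) ^ 2 ≤ 2 * dist x (g z) ^ 2 + 2 * (C : ℝ) ^ 2 * dist z w ^ 2 :=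
  calc dist x (g w) ^ 2
      ≤ (dist x (g z) + dist (g z) (g w)) ^ 2 := by gcongr; exact dist_triangle ..
    _ ≤ (dist x (g z) + C * dist z w) ^ 2 := by gcongr; exact hg.dist_le_mul z w
    _ ≤ 2 * (dist x (g z) ^ 2 + (C * dist z w) ^ 2) := add_sq_le
    _ = 2 * dist x (g z) ^ 2 + 2 * (C : ℝ) ^ 2 * dist z w ^ 2 := by ring

section Decoder

variable {ι : Type*} [Fintype ι] {E : ι → Type*} [∀ i, PseudoMetricSpace (E i)]

lemma piLp_two_dist_sq_eq_sum (u v : PiLp 2 E) : dist u v ^ 2 = ∑ i, dist (u i) (v i) ^ 2 := by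
  have dist_eq_sqrt : dist u v = √(∑ i, dist (u i) (v i) ^ 2) := by
    simp [PiLp.dist_eq_sum, Real.sqrt_eq_rpow]
  rw [dist_eq_sqrt, Real.sq_sqrt (by positivity)]

variable [DecidableEq ι] {κ : ι → Type*} [∀ i, Fintype (κ i)] {F : Type*} [PseudoMetricSpace F]
  {g : PiLp 2 E → F} {C : NNReal}

lemma sum_pi_prod_mul_dist_sq_le (hg : LipschitzWith C g) (x : F) (z : PiLp 2 E)
    (m : ∀ i, κ i → E i) {p : ∀ i, κ i → ℝ} (hp : ∀ i, p i ∈ stdSimplex ℝ (κ i)) :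
    ∑ q : ∀ i, κ i, (∏ i, p i (q i)) * dist x (g (WithLp.toLp 2 fun i => m i (q i))) ^ 2
      ≤ 2 * dist x (g z) ^ 2 + 2 * (C : ℝ) ^ 2 * ∑ i, ∑ k, p i k * dist (z i) (m i k) ^ 2 := by
  have weight_nonneg (q : ∀ i, κ i) : 0 ≤ ∏ i, p i (q i) := prod_nonneg fun i _ => (hp i).1 (q i)
  have sum_eq_one (i : ι) : ∑ k, p i k = 1 := (hp i).2
  calc ∑ q : ∀ i, κ i, (∏ i, p i (q i)) * dist x (g (WithLp.toLp 2 fun i => m i (q i))) ^ 2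
      ≤ ∑ q : ∀ i, κ i, (∏ i, p i (q i)) *
          (2 * dist x (g z) ^ 2 + 2 * (C : ℝ) ^ 2 * ∑ i, dist (z i) (m i (q i)) ^ 2) := by
        gcongr with q
        · exact weight_nonneg q
        · simpa only [piLp_two_dist_sq_eq_sum] using dist_sq_le_of_lipschitzWith hg x z _
    _ = (∑ q : ∀ i, κ i, ∏ i, p i (q i)) * (2 * dist x (g z) ^ 2) + 2 * (C : ℝ) ^ 2 *
          ∑ q : ∀ i, κ i, (∏ i, p i (q i)) * ∑ i, dist (z i) (m i (q i)) ^ 2 := by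
        simp only [mul_add, sum_add_distrib, sum_mul, mul_left_comm _ (2 * (C : ℝ) ^ 2), ← mul_sum]
    _ = 2 * dist x (g z) ^ 2 + 2 * (C : ℝ) ^ 2 * ∑ i, ∑ k, p i k * dist (z i) (m i k) ^ 2 := by
        rw [sum_pi_prod_eq_one sum_eq_one, one_mul,
          sum_pi_prod_mul_sum_apply sum_eq_one fun i k => dist (z i) (m i k) ^ 2]

theorem stmt_9_general {Ω : Type*} [Fintype Ω] {μ : Ω → ℝ} (hμ : ∀ ω, 0 ≤ μ ω)
    (hg : LipschitzWith C g) (x : Ω → F) (z : Ω → PiLp 2 E) (m : ∀ i, κ i → E i)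
    {p : Ω → ∀ i, κ i → ℝ} (hp : ∀ ω i, p ω i ∈ stdSimplex ℝ (κ i)) :
    ∑ ω, ∑ q : ∀ i, κ i, (μ ω * ∏ i, p ω i (q i)) *
        dist (x ω) (g (WithLp.toLp 2 fun i => m i (q i))) ^ 2
      ≤ 2 * ∑ ω, μ ω * dist (x ω) (g (z ω)) ^ 2
        + 2 * (C : ℝ) ^ 2 * ∑ ω, μ ω * ∑ i, ∑ k, p ω i k * dist (z ω i) (m i k) ^ 2 :=
  calc ∑ ω, ∑ q : ∀ i, κ i, (μ ω * ∏ i, p ω i (q i)) *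
          dist (x ω) (g (WithLp.toLp 2 fun i => m i (q i))) ^ 2
      = ∑ ω, μ ω * ∑ q : ∀ i, κ i, (∏ i, p ω i (q i)) *
          dist (x ω) (g (WithLp.toLp 2 fun i => m i (q i))) ^ 2 := by
        simp only [mul_assoc, mul_sum]
    _ ≤ ∑ ω, μ ω * (2 * dist (x ω) (g (z ω)) ^ 2
          + 2 * (C : ℝ) ^ 2 * ∑ i, ∑ k, p ω i k * dist (z ω i) (m i k) ^ 2) := by
        gcongr with ω
        · exact hμ ω
        · exact sum_pi_prod_mul_dist_sq_le hg (x ω) (z ω) m (hp ω)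
    _ = 2 * ∑ ω, μ ω * dist (x ω) (g (z ω)) ^ 2
        + 2 * (C : ℝ) ^ 2 * ∑ ω, μ ω * ∑ i, ∑ k, p ω i k * dist (z ω i) (m i k) ^ 2 := by
        simp only [mul_add, sum_add_distrib, mul_left_comm (μ _), ← mul_sum, mul_assoc]

end Decoder

/-- Combination of Theorem 1 and Proposition 1: on a finite probability space, with a
Lipschitz decoder `g` on `E = Fin N → ℝ^d` (with the Frobenius norm, i.e. `PiLp 2` over
Euclidean spaces), nearest-codeword indices `y`, codebook `m`, index-level transition
kernel `P`, and received indices `yq` conditionally independent across positions with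
`yq n ∼ P (y ω n, ·)`, the end-to-end loss `E[‖x - g (m ∘ yq)‖²]` is bounded by
`2 E[‖x - g z‖²] + 2 C₀² E[∑ n, ∑ k, P (y ω n) k * ‖z ω n - m k‖²]`. -/
theorem stmt_9 (K N d : ℕ) (hK : 0 < K) (hN : 0 < N) (hd : 0 < d)
    {Ω : Type*} [Fintype Ω] (μ : Ω → NNReal) (hμ : ∑ ω, μ ω = 1)
    {F : Type*} [NormedAddCommGroup F] [NormedSpace ℝ F]
    (g : PiLp 2 (fun _ : Fin N => EuclideanSpace ℝ (Fin d)) → F)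
    (C₀ : ℝ) (hC₀ : 0 ≤ C₀)
    (hg : ∀ u v : PiLp 2 (fun _ : Fin N => EuclideanSpace ℝ (Fin d)),
      ‖g u - g v‖ ≤ C₀ * ‖u - v‖)
    (x : Ω → F) (z : Ω → PiLp 2 (fun _ : Fin N => EuclideanSpace ℝ (Fin d)))
    (y : Ω → Fin N → Fin K)
    (m : Fin K → EuclideanSpace ℝ (Fin d))
    (P : Fin K → Fin K → NNReal) (hP : ∀ j, ∑ k, P j k = 1) :
    ∑ ω, ∑ yq : Fin N → Fin K,
        ((μ ω : ℝ) * ∏ n, (P (y ω n) (yq n) : ℝ)) *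
          ‖x ω - g ((WithLp.equiv 2 _).symm fun n => m (yq n))‖ ^ 2
      ≤ 2 * ∑ ω, (μ ω : ℝ) * ‖x ω - g (z ω)‖ ^ 2
        + 2 * C₀ ^ 2 * ∑ ω, (μ ω : ℝ) * ∑ n, ∑ k, (P (y ω n) k : ℝ) * ‖z ω n - m k‖ ^ 2 := by
  lift C₀ to NNReal using hC₀
  have lipschitz_g : LipschitzWith C₀ g := LipschitzWith.of_dist_le_mul fun u v => by
    simpa only [dist_eq_norm] using hg u v
  have row_mem_stdSimplex (j : Fin K) : (fun k => (P j k : ℝ)) ∈ stdSimplex ℝ (Fin K) :=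
    ⟨fun k => (P j k).coe_nonneg, by simp only [← NNReal.coe_sum, hP, NNReal.coe_one]⟩
  simpa only [dist_eq_norm] using!
    stmt_9_general (fun ω => (μ ω).coe_nonneg) lipschitz_g x z (fun _ => m)
      fun ω n => row_mem_stdSimplex (y ω n)
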